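/- Let p be a prime, k ≥ 1 an integer with p^{a-1} ≤ k < p^a and most significant base-p digit κ_{a-1}. Define β_k(x) = e^{2πi φ_p(k) φ_p^+(x)} for x ∈ [0,1) (with the product taken modulo 1, using the p-adic pairing). Then ∫₀¹∫₀¹ |x − y| conj(β_k(x)) β_k(y) dx dy = p^{-2a}(1/3 − 1/sin²(κ_{a-1}π/p)). -/

import Mathlib

/-- The `r`-th base-`p` digit of `x ∈ [0,1)` (finite expansion for `p`-adic rationals). -/
noncomputable def padDigit (p : ℕ) (x : ℝ) (r : ℕ) : ℕ := ⌊x * (p : ℝ) ^ (r + 1)⌋.toNat % p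

/-- The inverse Monna map `φ_p^+ : [0,1) → ℤ_p`, sending
`x = ∑ x_r p^{-(r+1)}` (finite expansion for `p`-adic rationals) to `∑ x_r p^r`. -/
noncomputable def phiPlus (p : ℕ) [Fact p.Prime] (x : ℝ) : ℤ_[p] :=
  ∑' r : ℕ, (padDigit p x r : ℤ_[p]) * (p : ℤ_[p]) ^ r

/-- The radical inverse function `φ_p : ℕ → [0,1)` in base `p`. -/
noncomputable def radInv (p : ℕ) (k : ℕ) : ℝ :=
  ∑ i ∈ Finset.range (Nat.log p k + 1), (k / p ^ i % p : ℕ) / (p : ℝ) ^ (i + 1)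

/-- The `p`-adic character `χ_k(z) = e^{2πi φ_p(k) z}`, where the product
`φ_p(k)·z` is taken modulo one: since `φ_p(k)` has denominator `p^a` with
`a = log_p k + 1`, only `z` modulo `p^a` (its approximation `z.appr a`) matters. -/
noncomputable def padChar (p : ℕ) [Fact p.Prime] (k : ℕ) (z : ℤ_[p]) : ℂ :=
  Complex.exp (2 * Real.pi * Complex.I *
    (radInv p k * (z.appr (Nat.log p k + 1) : ℝ)))

/-- The `p`-adic function `β_k(x) = χ_k(φ_p^+(x))`. -/
noncomputable def padBeta (p : ℕ) [Fact p.Prime] (k : ℕ) (x : ℝ) : ℂ :=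
  padChar p k (phiPlus p x)

/-- The Monna map `φ_p : ℤ_p → [0,1)`, sending `∑ z_r p^r` to `∑ z_r p^{-(r+1)} (mod 1)`. -/
noncomputable def monna (p : ℕ) [Fact p.Prime] (z : ℤ_[p]) : ℝ :=
  Int.fract (∑' r : ℕ, ((z.appr (r + 1) / p ^ r : ℕ) : ℝ) / (p : ℝ) ^ (r + 1))

/-- The `p`-adic shift `x ⊕_p σ = φ_p(φ_p^+(x) + φ_p^+(σ))`. -/
noncomputable def oplus (p : ℕ) [Fact p.Prime] (x σ : ℝ) : ℝ :=
  monna p (phiPlus p x + phiPlus p σ)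

/-- The inverse `p`-adic shift `x ⊖_p σ = φ_p(φ_p^+(x) - φ_p^+(σ))`. -/
noncomputable def ominus (p : ℕ) [Fact p.Prime] (x σ : ℝ) : ℝ :=
  monna p (phiPlus p x - phiPlus p σ)

/-!
If `F` is a primitive of `f` vanishing at both endpoints, two integrations by parts turn
`∬ |x - y| conj (f x) f y` into `-2 ∫ |F|²`. For `f = β_k`, put `N = p ^ a`. The function `β_k` is
constant on the intervals `[u / N, (u + 1) / N)`, and within a block of `p` consecutive intervals
its values form a geometric progression whose ratio is the nontrivial `p`-th root of unity
`ω = e^{2πi κ_{a-1} / p}`. Hence the sum over a block vanishes, and at the end points of the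
intervals `N F` is, up to a unimodular factor, a partial sum `(ω ^ c - 1) / (ω - 1)`, whose squared
modulus has mean `2 / |ω - 1|²` over `c < p`. As `F` is affine in between, this determines `∫ |F|²`.
-/

open Set MeasureTheory
open scoped ComplexConjugate Topology

section AbsKernel

variable {a b : ℝ}

theorem integral_abs_sub_smul_of_hasDeriv_right {E : Type*} [NormedAddCommGroup E]
    [NormedSpace ℝ E] [CompleteSpace E] {f F : ℝ → E} (hF : ContinuousOn F (Icc a b))
    (hFf : ∀ x ∈ Ioo a b, HasDerivWithinAt F (f x) (Ioi x) x)
    (hf : IntervalIntegrable f volume a b) (ha : F a = 0) (hb : F b = 0) {x : ℝ}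
    (hx : x ∈ Icc a b) :
    ∫ y in a..b, |x - y| • f y = (∫ y in a..x, F y) - ∫ y in x..b, F y := by
  obtain ⟨hax, hxb⟩ := hx
  have hf_left : IntervalIntegrable f volume a x :=
    hf.mono_set (by rw [uIcc_of_le hax, uIcc_of_le (hax.trans hxb)]; gcongr)
  have hf_right : IntervalIntegrable f volume x b :=
    hf.mono_set (by rw [uIcc_of_le hxb, uIcc_of_le (hax.trans hxb)]; gcongr)
  have left : ∫ y in a..x, |x - y| • f y = ∫ y in a..x, F y := calc
    _ = ∫ y in a..x, (x - y) • f y := intervalIntegral.integral_congr fun y hy => by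
      rw [uIcc_of_le hax] at hy
      simp only [abs_of_nonneg (sub_nonneg.2 hy.2)]
    _ = (x - x) • F x - (x - a) • F a - ∫ y in a..x, (-1 : ℝ) • F y := by
      refine intervalIntegral.integral_smul_deriv_eq_deriv_smul_of_hasDeriv_right (by fun_prop)
        (hF.mono ?_) (fun y _ => ((hasDerivAt_id y).const_sub x).hasDerivWithinAt)
        (fun y hy => hFf y ?_) intervalIntegrable_const hf_left
      · rw [uIcc_of_le hax]; gcongr
      · rw [min_eq_left hax, max_eq_right hax] at hy
        exact ⟨hy.1, hy.2.trans_le hxb⟩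
    _ = ∫ y in a..x, F y := by simp [ha]
  have right : ∫ y in x..b, |x - y| • f y = -∫ y in x..b, F y := calc
    _ = ∫ y in x..b, (y - x) • f y := intervalIntegral.integral_congr fun y hy => by
      rw [uIcc_of_le hxb] at hy
      simp only [abs_sub_comm x, abs_of_nonneg (sub_nonneg.2 hy.1)]
    _ = (b - x) • F b - (x - x) • F x - ∫ y in x..b, (1 : ℝ) • F y := by
      refine intervalIntegral.integral_smul_deriv_eq_deriv_smul_of_hasDeriv_right (by fun_prop)
        (hF.mono ?_) (fun y _ => ((hasDerivAt_id y).sub_const x).hasDerivWithinAt)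
        (fun y hy => hFf y ?_) intervalIntegrable_const hf_right
      · rw [uIcc_of_le hxb]; gcongr
      · rw [min_eq_left hxb, max_eq_right hxb] at hy
        exact ⟨hax.trans_lt hy.1, hy.2⟩
    _ = -∫ y in x..b, F y := by simp [hb]
  rw [← intervalIntegral.integral_add_adjacent_intervals
    (hf_left.continuousOn_smul (by fun_prop)) (hf_right.continuousOn_smul (by fun_prop)),
    left, right, sub_eq_add_neg]

theorem hasDerivAt_integral_left_sub_integral_right {E : Type*} [NormedAddCommGroup E]
    [NormedSpace ℝ E] [CompleteSpace E] {F : ℝ → E} (hF : ContinuousOn F (Icc a b)) {x : ℝ}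
    (hx : x ∈ Ioo a b) :
    HasDerivAt (fun x => (∫ y in a..x, F y) - ∫ y in x..b, F y) ((2 : ℝ) • F x) x := by
  have hFx : ContinuousAt F x := hF.continuousAt (Icc_mem_nhds hx.1 hx.2)
  have hmeas : StronglyMeasurableAtFilter F (𝓝 x) :=
    (hF.mono Ioo_subset_Icc_self).stronglyMeasurableAtFilter isOpen_Ioo x hx
  have hleft : IntervalIntegrable F volume a x :=
    (hF.mono (Icc_subset_Icc_right hx.2.le)).intervalIntegrable_of_Icc hx.1.le
  have hright : IntervalIntegrable F volume x b :=
    (hF.mono (Icc_subset_Icc_left hx.1.le)).intervalIntegrable_of_Icc hx.2.le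
  exact ((intervalIntegral.integral_hasDerivAt_right hleft hmeas hFx).fun_sub
    (intervalIntegral.integral_hasDerivAt_left hright hmeas hFx)).congr_deriv
    (by rw [sub_neg_eq_add, two_smul])

theorem integral_integral_abs_sub_smul_mul_of_hasDeriv_right {A : Type*} [NormedRing A]
    [NormedAlgebra ℝ A] [CompleteSpace A] {f g F G : ℝ → A} (hab : a ≤ b)
    (hF : ContinuousOn F (Icc a b)) (hFf : ∀ x ∈ Ioo a b, HasDerivWithinAt F (f x) (Ioi x) x)
    (hf : IntervalIntegrable f volume a b) (hFa : F a = 0) (hFb : F b = 0)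
    (hG : ContinuousOn G (Icc a b)) (hGg : ∀ x ∈ Ioo a b, HasDerivWithinAt G (g x) (Ioi x) x)
    (hg : IntervalIntegrable g volume a b) (hGa : G a = 0) (hGb : G b = 0) :
    ∫ x in a..b, ∫ y in a..b, |x - y| • (g x * f y) = (-2 : ℝ) • ∫ x in a..b, G x * F x := by
  let H : ℝ → A := fun x => (∫ y in a..x, F y) - ∫ y in x..b, F y
  have hFint : IntegrableOn F (uIcc a b) := by
    rw [uIcc_of_le hab]; exact hF.integrableOn_Icc
  have hHcont : ContinuousOn H (uIcc a b) :=
    (intervalIntegral.continuousOn_primitive_interval hFint).sub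
      (intervalIntegral.continuousOn_primitive_interval_left hFint)
  have hF₂ : ContinuousOn (fun x => (2 : ℝ) • F x) (uIcc a b) := by
    rw [uIcc_of_le hab]; exact hF.const_smul 2
  calc ∫ x in a..b, ∫ y in a..b, |x - y| • (g x * f y)
      = ∫ x in a..b, g x * H x := intervalIntegral.integral_congr fun x hx => by
        rw [uIcc_of_le hab] at hx
        simp only [← mul_smul_comm, H]
        rw [← integral_abs_sub_smul_of_hasDeriv_right hF hFf hf hFa hFb hx]
        simp only [intervalIntegral.integral_of_le hab]
        exact integral_const_mul_of_integrable (hf.continuousOn_smul (by fun_prop)).1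
    _ = G b * H b - G a * H a - ∫ x in a..b, G x * ((2 : ℝ) • F x) := by
        rw [eq_sub_iff_add_eq, ← intervalIntegral.integral_add (hg.mul_continuousOn hHcont)
          (hG.intervalIntegrable_of_Icc hab |>.mul_continuousOn hF₂)]
        refine intervalIntegral.integral_deriv_mul_eq_sub_of_hasDeriv_right
          (by rwa [uIcc_of_le hab]) hHcont ?_ ?_ hg hF₂.intervalIntegrable
        all_goals rw [min_eq_left hab, max_eq_right hab]
        · exact hGg
        · exact fun x hx =>
            (hasDerivAt_integral_left_sub_integral_right hF hx).hasDerivWithinAt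
    _ = (-2 : ℝ) • ∫ x in a..b, G x * F x := by
        simp only [hGa, hGb, mul_smul_comm, intervalIntegral.integral_smul]
        simp

end AbsKernel

theorem integral_integral_comp_mul_left {E : Type*} [NormedAddCommGroup E] [NormedSpace ℝ E]
    (K : ℝ → ℝ → E) (a b : ℝ) {c : ℝ} (hc : c ≠ 0) :
    ∫ x in a..b, ∫ y in a..b, K (c * x) (c * y) =
      (c ^ 2)⁻¹ • ∫ x in c * a..c * b, ∫ y in c * a..c * b, K x y := by
  simp only [intervalIntegral.integral_comp_mul_left _ hc, intervalIntegral.integral_smul,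
    intervalIntegral.integral_comp_mul_left (fun x => ∫ y in c * a..c * b, K x y) hc]
  rw [smul_smul, sq, mul_inv]

theorem eqOn_comp_floor_const {α : Type*} (B : ℕ → α) (u : ℕ) :
    EqOn (fun x : ℝ => B ⌊x⌋₊) (fun _ => B u) (Ico (u : ℝ) (u + 1)) := fun x hx => by
  simp only [Nat.floor_eq_on_Ico u x hx]

section FloorStep

variable {E : Type*} [NormedAddCommGroup E] (B : ℕ → E)

theorem intervalIntegrable_comp_floor_of_mem_Icc {u : ℕ} {t : ℝ} (ht : t ∈ Icc (u : ℝ) (u + 1)) :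
    IntervalIntegrable (fun x : ℝ => B ⌊x⌋₊) volume u t := by
  refine intervalIntegrable_const.congr_uIoo (f := fun _ => B u) fun x hx => ?_
  rw [uIoo_of_le ht.1] at hx
  exact (eqOn_comp_floor_const B u ⟨hx.1.le, hx.2.trans_le ht.2⟩).symm

theorem intervalIntegrable_comp_floor (n : ℕ) :
    IntervalIntegrable (fun x : ℝ => B ⌊x⌋₊) volume 0 n := by
  simpa using IntervalIntegrable.trans_iterate (a := fun u : ℕ => (u : ℝ)) (n := n) fun u _ =>
    intervalIntegrable_comp_floor_of_mem_Icc B (u := u) (by simp)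

variable [NormedSpace ℝ E] [CompleteSpace E]

theorem integral_comp_floor_of_mem_Icc {u : ℕ} {t : ℝ} (ht : t ∈ Icc (u : ℝ) (u + 1)) :
    ∫ x in u..t, B ⌊x⌋₊ = (t - u) • B u := by
  rw [← intervalIntegral.integral_const]
  refine intervalIntegral.integral_congr_Ioo_of_le ht.1 fun x hx => ?_
  exact eqOn_comp_floor_const B u ⟨hx.1.le, hx.2.trans_le ht.2⟩

theorem integral_comp_floor (n : ℕ) :
    ∫ x in (0 : ℝ)..n, B ⌊x⌋₊ = ∑ u ∈ Finset.range n, B u := by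
  rw [← Nat.cast_zero, ← intervalIntegral.sum_integral_adjacent_intervals
    (a := fun u : ℕ => (u : ℝ)) fun u _ => intervalIntegrable_comp_floor_of_mem_Icc B (by simp)]
  refine Finset.sum_congr rfl fun u _ => ?_
  rw [integral_comp_floor_of_mem_Icc B (by simp)]
  simp

theorem primitive_comp_floor_of_mem_Icc {u : ℕ} {t : ℝ} (ht : t ∈ Icc (u : ℝ) (u + 1)) :
    ∫ x in 0..t, B ⌊x⌋₊ = ∑ v ∈ Finset.range u, B v + (t - u) • B u := by
  rw [← integral_comp_floor, ← integral_comp_floor_of_mem_Icc B ht,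
    intervalIntegral.integral_add_adjacent_intervals (intervalIntegrable_comp_floor B u)
      (intervalIntegrable_comp_floor_of_mem_Icc B ht)]

theorem hasDerivWithinAt_primitive_comp_floor {t : ℝ} (ht : 0 ≤ t) :
    HasDerivWithinAt (fun t => ∫ x in 0..t, B ⌊x⌋₊) (B ⌊t⌋₊) (Ioi t) t := by
  have ht_floor : (⌊t⌋₊ : ℝ) ≤ t := Nat.floor_le ht
  have affine : HasDerivWithinAt
      (fun s : ℝ => ∑ v ∈ Finset.range ⌊t⌋₊, B v + (s - ⌊t⌋₊) • B ⌊t⌋₊) (B ⌊t⌋₊) (Ioi t) t := by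
    simpa using (((hasDerivWithinAt_id t (Ioi t)).sub_const _).smul_const (B ⌊t⌋₊)).const_add
      (∑ v ∈ Finset.range ⌊t⌋₊, B v)
  refine affine.congr_of_eventuallyEq ?_ ?_
  · filter_upwards [Ioo_mem_nhdsGT (Nat.lt_floor_add_one t)] with s hs
    exact primitive_comp_floor_of_mem_Icc B ⟨ht_floor.trans hs.1.le, hs.2.le⟩
  · exact primitive_comp_floor_of_mem_Icc B ⟨ht_floor, (Nat.lt_floor_add_one t).le⟩

end FloorStep

theorem integral_norm_add_smul_sq {E : Type*} [NormedAddCommGroup E] [InnerProductSpace ℝ E]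
    (z w : E) :
    ∫ t in (0 : ℝ)..1, ‖z + t • w‖ ^ 2 = (‖z‖ ^ 2 + ‖z + w‖ ^ 2) / 2 - ‖w‖ ^ 2 / 6 := by
  have expand (t : ℝ) :
      ‖z + t • w‖ ^ 2 = ‖z‖ ^ 2 + t * (2 * inner ℝ z w) + t ^ 2 * ‖w‖ ^ 2 := by
    rw [norm_add_sq_real, inner_smul_right, norm_smul, mul_pow, Real.norm_eq_abs, sq_abs]
    ring
  have expand_one := expand 1
  rw [one_smul] at expand_one
  simp only [expand]
  rw [intervalIntegral.integral_add (Continuous.intervalIntegrable (by fun_prop) _ _)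
    (Continuous.intervalIntegrable (by fun_prop) _ _),
    intervalIntegral.integral_add (Continuous.intervalIntegrable (by fun_prop) _ _)
    (Continuous.intervalIntegrable (by fun_prop) _ _), intervalIntegral.integral_const,
    intervalIntegral.integral_mul_const, intervalIntegral.integral_mul_const, integral_id,
    integral_pow, expand_one]
  norm_num
  ring

theorem integral_norm_primitive_comp_floor_sq {E : Type*} [NormedAddCommGroup E]
    [InnerProductSpace ℝ E] [CompleteSpace E] (B : ℕ → E) (n : ℕ) :
    ∫ t in (0 : ℝ)..n, ‖∫ x in 0..t, B ⌊x⌋₊‖ ^ 2 =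
      ∑ u ∈ Finset.range n, ((‖∑ v ∈ Finset.range u, B v‖ ^ 2 +
        ‖∑ v ∈ Finset.range (u + 1), B v‖ ^ 2) / 2 - ‖B u‖ ^ 2 / 6) := by
  have hcont (m : ℕ) : ContinuousOn (fun t => ‖∫ x in 0..t, B ⌊x⌋₊‖ ^ 2) (uIcc (0 : ℝ) m) :=
    (intervalIntegral.continuousOn_primitive_interval' (intervalIntegrable_comp_floor B m)
      left_mem_uIcc).norm.pow 2
  have hint (u : ℕ) : IntervalIntegrable (fun t => ‖∫ x in 0..t, B ⌊x⌋₊‖ ^ 2) volume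
      (u : ℝ) ((u + 1 : ℕ) : ℝ) :=
    (hcont u).intervalIntegrable.symm.trans (hcont (u + 1)).intervalIntegrable
  have integral_piece (u : ℕ) : ∫ t in (u : ℝ)..(u + 1 : ℕ), ‖∫ x in 0..t, B ⌊x⌋₊‖ ^ 2 =
      (‖∑ v ∈ Finset.range u, B v‖ ^ 2 + ‖∑ v ∈ Finset.range (u + 1), B v‖ ^ 2) / 2 -
        ‖B u‖ ^ 2 / 6 := calc
    _ = ∫ t in (u : ℝ)..(u + 1 : ℕ), ‖∑ v ∈ Finset.range u, B v + (t - u) • B u‖ ^ 2 :=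
      intervalIntegral.integral_congr fun t ht => by
        rw [Nat.cast_succ, uIcc_of_le (by simp)] at ht
        simp only [primitive_comp_floor_of_mem_Icc B ht]
    _ = ∫ t in (0 : ℝ)..1, ‖∑ v ∈ Finset.range u, B v + t • B u‖ ^ 2 := by
      rw [intervalIntegral.integral_comp_sub_right
        (fun t => ‖∑ v ∈ Finset.range u, B v + t • B u‖ ^ 2)]
      simp
    _ = _ := by rw [integral_norm_add_smul_sq, Finset.sum_range_succ]
  have split := intervalIntegral.sum_integral_adjacent_intervals (a := fun u : ℕ => (u : ℝ))
    (n := n) fun u _ => hint u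
  simp only [Nat.cast_zero] at split
  rw [← split]
  exact Finset.sum_congr rfl fun u _ => integral_piece u

theorem integral_integral_abs_sub_smul_conj_mul_comp_floor {B : ℕ → ℂ} {n : ℕ}
    (hB : ∑ u ∈ Finset.range n, B u = 0) :
    ∫ x in (0 : ℝ)..n, ∫ y in (0 : ℝ)..n, |x - y| • (conj (B ⌊x⌋₊) * B ⌊y⌋₊) =
      (((∑ u ∈ Finset.range n, ‖B u‖ ^ 2) / 3 -
        2 * ∑ u ∈ Finset.range n, ‖∑ v ∈ Finset.range u, B v‖ ^ 2 : ℝ) : ℂ) := by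
  have hcont (D : ℕ → ℂ) : ContinuousOn (fun t => ∫ x in (0 : ℝ)..t, D ⌊x⌋₊) (Icc 0 n) := by
    rw [← uIcc_of_le n.cast_nonneg]
    exact intervalIntegral.continuousOn_primitive_interval' (intervalIntegrable_comp_floor D n)
      left_mem_uIcc
  have hderiv (D : ℕ → ℂ) (t : ℝ) (ht : t ∈ Ioo 0 (n : ℝ)) :=
    hasDerivWithinAt_primitive_comp_floor D ht.1.le
  have conj_sum : ∑ u ∈ Finset.range n, conj (B u) = 0 := by rw [← map_sum, hB, map_zero]
  have shift : ∑ u ∈ Finset.range n, ‖∑ v ∈ Finset.range (u + 1), B v‖ ^ 2 =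
      ∑ u ∈ Finset.range n, ‖∑ v ∈ Finset.range u, B v‖ ^ 2 := by
    have := (Finset.sum_range_succ' (fun u => ‖∑ v ∈ Finset.range u, B v‖ ^ 2) n).symm.trans
      (Finset.sum_range_succ _ n)
    simpa [hB] using this
  calc _ = (-2 : ℝ) • ∫ t in (0 : ℝ)..n,
          (∫ x in 0..t, conj (B ⌊x⌋₊)) * ∫ x in 0..t, B ⌊x⌋₊ :=
        integral_integral_abs_sub_smul_mul_of_hasDeriv_right n.cast_nonneg (hcont B) (hderiv B)
          (intervalIntegrable_comp_floor B n) intervalIntegral.integral_same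
          ((integral_comp_floor B n).trans hB)
          (hcont fun u => conj (B u)) (hderiv fun u => conj (B u))
          (intervalIntegrable_comp_floor (fun u => conj (B u)) n) intervalIntegral.integral_same
          ((integral_comp_floor (fun u => conj (B u)) n).trans conj_sum)
    _ = (-2 : ℝ) • ((∫ t in (0 : ℝ)..n, ‖∫ x in 0..t, B ⌊x⌋₊‖ ^ 2 : ℝ) : ℂ) := by
        rw [← intervalIntegral.integral_ofReal]
        congr 1
        refine intervalIntegral.integral_congr fun t _ => ?_
        simp only [intervalIntegral.intervalIntegral_conj, Complex.conj_mul', Complex.ofReal_pow]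
    _ = _ := by
        rw [integral_norm_primitive_comp_floor_sq, Finset.sum_sub_distrib, ← Finset.sum_div,
          ← Finset.sum_div, Finset.sum_add_distrib, shift, Complex.real_smul,
          ← Complex.ofReal_mul]
        congr 1
        ring

theorem integral_integral_abs_sub_smul_conj_mul_comp_floor_mul {B : ℕ → ℂ} {n : ℕ} (hn : n ≠ 0)
    (hB : ∑ u ∈ Finset.range n, B u = 0) :
    ∫ x in (0 : ℝ)..1, ∫ y in (0 : ℝ)..1, |x - y| • (conj (B ⌊n * x⌋₊) * B ⌊n * y⌋₊) =
      ((((∑ u ∈ Finset.range n, ‖B u‖ ^ 2) / 3 -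
        2 * ∑ u ∈ Finset.range n, ‖∑ v ∈ Finset.range u, B v‖ ^ 2) / n ^ 3 : ℝ) : ℂ) := by
  have hn₀ : (n : ℝ) ≠ 0 := Nat.cast_ne_zero.2 hn
  have abs_rescale (x y : ℝ) : |x - y| = (n : ℝ)⁻¹ * |n * x - n * y| := by
    rw [← mul_sub, abs_mul, Nat.abs_cast, inv_mul_cancel_left₀ hn₀]
  calc _ = ∫ x in (0 : ℝ)..1, ∫ y in (0 : ℝ)..1,
        (n : ℝ)⁻¹ • (|n * x - n * y| • (conj (B ⌊n * x⌋₊) * B ⌊n * y⌋₊)) := by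
        simp only [smul_smul, ← abs_rescale]
    _ = ((n : ℝ)⁻¹ * (n ^ 2 : ℝ)⁻¹) •
        ∫ x in (0 : ℝ)..n, ∫ y in (0 : ℝ)..n, |x - y| • (conj (B ⌊x⌋₊) * B ⌊y⌋₊) := by
        simp only [intervalIntegral.integral_smul]
        rw [integral_integral_comp_mul_left
          (fun x y => |x - y| • (conj (B ⌊x⌋₊) * B ⌊y⌋₊)) 0 1 hn₀, mul_zero, mul_one, smul_smul]
    _ = _ := by
        rw [integral_integral_abs_sub_smul_conj_mul_comp_floor hB, Complex.real_smul,
          ← Complex.ofReal_mul]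
        congr 1
        field_simp

theorem sum_range_mul_eq_sum_sum {M : Type*} [AddCommMonoid M] (f : ℕ → M) (n p : ℕ) :
    ∑ u ∈ Finset.range (n * p), f u =
      ∑ q ∈ Finset.range n, ∑ c ∈ Finset.range p, f (q * p + c) := by
  induction n with
  | zero => simp
  | succ n ih => rw [Nat.succ_mul, Finset.sum_range_add, ih, Finset.sum_range_succ]

section GeometricBlocks

variable {K : Type*} [DivisionRing K] {ω : K} {p : ℕ}

theorem geom_sum_eq_zero_of_pow_eq_one (hω : ω ≠ 1) (hωp : ω ^ p = 1) :
    ∑ i ∈ Finset.range p, ω ^ i = 0 := by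
  rw [geom_sum_eq hω, hωp, sub_self, zero_div]

theorem sum_range_mul_add_of_pow_eq_one (hω : ω ≠ 1) (hωp : ω ^ p = 1) {B : ℕ → K}
    (hB : ∀ q, ∀ c < p, B (q * p + c) = B (q * p) * ω ^ c) (q : ℕ) {c : ℕ} (hc : c ≤ p) :
    ∑ u ∈ Finset.range (q * p + c), B u = B (q * p) * ∑ d ∈ Finset.range c, ω ^ d := by
  have partial_block (r : ℕ) {c : ℕ} (hc : c ≤ p) :
      ∑ d ∈ Finset.range c, B (r * p + d) = B (r * p) * ∑ d ∈ Finset.range c, ω ^ d := by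
    rw [Finset.mul_sum]
    exact Finset.sum_congr rfl fun d hd => hB r d ((Finset.mem_range.1 hd).trans_le hc)
  rw [Finset.sum_range_add, sum_range_mul_eq_sum_sum, partial_block q hc, add_eq_right]
  refine Finset.sum_eq_zero fun r _ => ?_
  rw [partial_block r le_rfl, geom_sum_eq_zero_of_pow_eq_one hω hωp, mul_zero]

end GeometricBlocks

section RootsOfUnity

variable {p : ℕ} {ω : ℂ}

theorem sum_norm_geom_sum_sq (hp : p ≠ 0) (hω : ω ≠ 1) (hωp : ω ^ p = 1) :
    ∑ c ∈ Finset.range p, ‖∑ d ∈ Finset.range c, ω ^ d‖ ^ 2 = 2 * p / ‖ω - 1‖ ^ 2 := by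
  have hnorm : ‖ω‖ = 1 := Complex.norm_eq_one_of_pow_eq_one hωp hp
  have hsum : ∑ c ∈ Finset.range p, (ω ^ c).re = 0 := by
    rw [← Complex.re_sum, geom_sum_eq_zero_of_pow_eq_one hω hωp, Complex.zero_re]
  have hterm (c : ℕ) : ‖ω ^ c - 1‖ ^ 2 = 2 - 2 * (ω ^ c).re := by
    rw [← Complex.normSq_eq_norm_sq, Complex.normSq_sub, Complex.normSq_eq_norm_sq, norm_pow,
      hnorm]
    simp only [one_pow, map_one, mul_one]
    ring
  simp only [geom_sum_eq hω, norm_div, div_pow, hterm]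
  rw [← Finset.sum_div, Finset.sum_sub_distrib, ← Finset.mul_sum, hsum]
  simp [mul_comm]

theorem sum_norm_sum_range_sq_of_pow_eq_one (hp : p ≠ 0) (hω : ω ≠ 1) (hωp : ω ^ p = 1)
    {B : ℕ → ℂ} (hB : ∀ q, ∀ c < p, B (q * p + c) = B (q * p) * ω ^ c)
    (hnorm : ∀ q, ‖B (q * p)‖ = 1) (n : ℕ) :
    ∑ u ∈ Finset.range (n * p), ‖∑ v ∈ Finset.range u, B v‖ ^ 2 =
      2 * (n * p) / ‖ω - 1‖ ^ 2 := by
  rw [sum_range_mul_eq_sum_sum]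
  calc _ = ∑ q ∈ Finset.range n, 2 * p / ‖ω - 1‖ ^ 2 := by
        refine Finset.sum_congr rfl fun q _ => ?_
        rw [← sum_norm_geom_sum_sq hp hω hωp]
        refine Finset.sum_congr rfl fun c hc => ?_
        rw [sum_range_mul_add_of_pow_eq_one hω hωp hB q (Finset.mem_range.1 hc).le, norm_mul,
          hnorm, one_mul]
    _ = _ := by
        rw [Finset.sum_const, Finset.card_range, nsmul_eq_mul]
        ring

end RootsOfUnity

theorem sum_range_mul_pow_lt {p : ℕ} {d : ℕ → ℕ} (hd : ∀ r, d r < p) (n : ℕ) :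
    ∑ r ∈ Finset.range n, d r * p ^ r < p ^ n := by
  induction n with
  | zero => simp
  | succ n ih =>
    calc ∑ r ∈ Finset.range (n + 1), d r * p ^ r
        < p ^ n + d n * p ^ n := by rw [Finset.sum_range_succ]; gcongr
      _ = (d n + 1) * p ^ n := by ring
      _ ≤ p ^ (n + 1) := by rw [pow_succ']; gcongr; exact hd n

section PadicDigits

variable {p : ℕ} [hp : Fact p.Prime]

theorem summable_natCast_mul_pow (d : ℕ → ℕ) :
    Summable fun r => (d r : ℤ_[p]) * (p : ℤ_[p]) ^ r := by
  have hgeom : Summable fun r => (p : ℝ)⁻¹ ^ r :=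
    summable_geometric_of_lt_one (by positivity)
      (inv_lt_one_of_one_lt₀ (by exact_mod_cast hp.out.one_lt))
  refine hgeom.of_norm_bounded fun r => ?_
  rw [norm_mul, norm_pow, PadicInt.norm_p]
  exact mul_le_of_le_one_left (by positivity) (PadicInt.norm_le_one _)

theorem appr_eq_of_sub_mem_span {z : ℤ_[p]} {n a : ℕ} (ha : a < p ^ n)
    (hz : z - a ∈ Ideal.span {(p : ℤ_[p]) ^ n}) : z.appr n = a := by
  have h := PadicInt.zmod_congr_of_sub_mem_span n z _ _ (z.appr_spec n) hz
  rw [ZMod.natCast_eq_natCast_iff'] at h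
  rwa [Nat.mod_eq_of_lt (z.appr_lt n), Nat.mod_eq_of_lt ha] at h

theorem appr_tsum_mul_pow {d : ℕ → ℕ} (hd : ∀ r, d r < p) (n : ℕ) :
    (∑' r, (d r : ℤ_[p]) * (p : ℤ_[p]) ^ r).appr n = ∑ r ∈ Finset.range n, d r * p ^ r := by
  refine appr_eq_of_sub_mem_span (sum_range_mul_pow_lt hd n) ?_
  rw [Ideal.mem_span_singleton, ← (summable_natCast_mul_pow d).sum_add_tsum_nat_add n]
  push_cast
  refine ⟨∑' r, (d (r + n) : ℤ_[p]) * (p : ℤ_[p]) ^ r, ?_⟩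
  rw [add_sub_cancel_left, ← (summable_natCast_mul_pow fun r => d (r + n)).tsum_mul_left]
  exact tsum_congr fun r => by ring

theorem appr_phiPlus (x : ℝ) (n : ℕ) :
    (phiPlus p x).appr n = ∑ r ∈ Finset.range n, padDigit p x r * p ^ r :=
  appr_tsum_mul_pow (fun _ => Nat.mod_lt _ hp.out.pos) n

end PadicDigits

theorem padDigit_eq_floor_div_mod {p : ℕ} (hp : p ≠ 0) {m r : ℕ} (hr : r ≤ m) (x : ℝ) :
    padDigit p x r = ⌊x * p ^ (m + 1)⌋₊ / p ^ (m - r) % p := by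
  have hp₀ : (p : ℝ) ≠ 0 := Nat.cast_ne_zero.2 hp
  rw [padDigit, Int.floor_toNat, ← Nat.floor_div_natCast, Nat.cast_pow,
    show m + 1 = r + 1 + (m - r) by omega, pow_add _ (r + 1), ← mul_assoc,
    mul_div_cancel_right₀ _ (pow_ne_zero _ hp₀)]

section PadBeta

variable {p : ℕ} [hp : Fact p.Prime]

theorem appr_phiPlus_congr {m : ℕ} {x y : ℝ}
    (h : ⌊x * p ^ (m + 1)⌋₊ = ⌊y * p ^ (m + 1)⌋₊) :
    (phiPlus p x).appr (m + 1) = (phiPlus p y).appr (m + 1) := by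
  simp only [appr_phiPlus]
  refine Finset.sum_congr rfl fun r hr => ?_
  have hr : r ≤ m := Finset.mem_range_succ_iff.1 hr
  rw [padDigit_eq_floor_div_mod hp.out.ne_zero hr, padDigit_eq_floor_div_mod hp.out.ne_zero hr, h]

theorem appr_phiPlus_eq_add_mul_pow {m q c : ℕ} (hc : c < p) {x y : ℝ}
    (hx : ⌊x * p ^ (m + 1)⌋₊ = q * p + c) (hy : ⌊y * p ^ (m + 1)⌋₊ = q * p) :
    (phiPlus p x).appr (m + 1) = (phiPlus p y).appr (m + 1) + c * p ^ m := by
  have digit_of_lt {r : ℕ} (hr : r < m) : padDigit p x r = padDigit p y r := by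
    rw [padDigit_eq_floor_div_mod hp.out.ne_zero hr.le,
      padDigit_eq_floor_div_mod hp.out.ne_zero hr.le, hx, hy,
      show m - r = 1 + (m - r - 1) by omega, pow_add, pow_one, ← Nat.div_div_eq_div_mul,
      ← Nat.div_div_eq_div_mul, Nat.mul_div_cancel _ hp.out.pos, mul_comm q p,
      Nat.mul_add_div hp.out.pos, Nat.div_eq_of_lt hc, add_zero]
  have last_digit_x : padDigit p x m = c := by
    rw [padDigit_eq_floor_div_mod hp.out.ne_zero le_rfl, hx]
    simp [Nat.mod_eq_of_lt hc]
  have last_digit_y : padDigit p y m = 0 := by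
    rw [padDigit_eq_floor_div_mod hp.out.ne_zero le_rfl, hy]
    simp
  rw [appr_phiPlus, appr_phiPlus, Finset.sum_range_succ, Finset.sum_range_succ,
    Finset.sum_congr rfl fun r hr => by rw [digit_of_lt (Finset.mem_range.1 hr)],
    last_digit_x, last_digit_y, zero_mul, add_zero]

theorem norm_padBeta (k : ℕ) (x : ℝ) : ‖padBeta p k x‖ = 1 := by
  rw [padBeta, padChar, ← Complex.norm_exp_ofReal_mul_I (2 * Real.pi *
    (radInv p k * (phiPlus p x).appr (Nat.log p k + 1)))]
  congr 2
  push_cast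
  ring

end PadBeta

/-- The root of unity `ω = e^{2πi κ_{a-1} / p}` attached to the leading base-`p` digit of `k`: the
ratio of the values of `β_k` on neighbouring intervals `[u / p^a, (u + 1) / p^a)` whose left
end points agree in all base-`p` digits but the last. -/
noncomputable def leadingRoot (p k : ℕ) : ℂ :=
  Complex.exp (2 * Real.pi * Complex.I * ((k / p ^ Nat.log p k : ℕ) / p))

/-- The value of `β_k` on `[u / p^a, (u + 1) / p^a)` for `u < p^a`, where `a = log_p k + 1`. -/
noncomputable def padBetaStep (p : ℕ) [Fact p.Prime] (k u : ℕ) : ℂ :=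
  padBeta p k (u / (p : ℝ) ^ (Nat.log p k + 1))

theorem div_pow_log_lt {p : ℕ} (hp : 1 < p) (k : ℕ) : k / p ^ Nat.log p k < p :=
  Nat.div_lt_of_lt_mul (by rw [← pow_succ]; exact Nat.lt_pow_succ_log_self hp k)

theorem isPrimitiveRoot_leadingRoot {p k : ℕ} (hp : p.Prime) (hk : k ≠ 0) :
    IsPrimitiveRoot (leadingRoot p k) p := by
  have digit_pos : 0 < k / p ^ Nat.log p k :=
    Nat.div_pos (Nat.pow_log_le_self p hk) (pow_pos hp.pos _)
  exact Complex.isPrimitiveRoot_exp_of_coprime _ p hp.ne_zero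
    (Nat.coprime_of_lt_prime digit_pos.ne' (div_pow_log_lt hp.one_lt k) hp).symm

theorem norm_leadingRoot_sub_one_sq (p k : ℕ) :
    ‖leadingRoot p k - 1‖ ^ 2 =
      4 * Real.sin ((k / p ^ Nat.log p k : ℕ) * Real.pi / p) ^ 2 := by
  have exponent_eq : 2 * Real.pi * Complex.I * ((k / p ^ Nat.log p k : ℕ) / p) =
      Complex.I * ((2 * ((k / p ^ Nat.log p k : ℕ) * Real.pi / p) : ℝ) : ℂ) := by
    push_cast
    ring
  rw [leadingRoot, exponent_eq, Complex.norm_exp_I_mul_ofReal_sub_one, Real.norm_eq_abs, sq_abs,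
    mul_div_cancel_left₀ _ two_ne_zero]
  ring

theorem exp_radInv_mul_pow_log {p : ℕ} (hp : 1 < p) (k : ℕ) :
    Complex.exp (2 * Real.pi * Complex.I * (radInv p k * (p : ℝ) ^ Nat.log p k)) =
      leadingRoot p k := by
  set m := Nat.log p k with hm
  have hp₀ : (p : ℂ) ≠ 0 := Nat.cast_ne_zero.2 (zero_lt_one.trans hp).ne'
  have radInv_mul_pow : (radInv p k * (p : ℝ) ^ m : ℂ) =
      (∑ i ∈ Finset.range m, k / p ^ i % p * p ^ (m - 1 - i) : ℕ) + (k / p ^ m : ℕ) / (p : ℂ) := by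
    rw [radInv, ← hm, Finset.sum_range_succ, Nat.mod_eq_of_lt (div_pow_log_lt hp k)]
    push_cast
    rw [add_mul, Finset.sum_mul]
    congr 1
    · refine Finset.sum_congr rfl fun i hi => ?_
      have pow_split : (p : ℂ) ^ m = p ^ (i + 1) * p ^ (m - 1 - i) := by
        rw [← pow_add]
        congr 1
        have := Finset.mem_range.1 hi
        omega
      rw [pow_split]
      field_simp
    · field_simp
      ring
  rw [leadingRoot, radInv_mul_pow, mul_add, Complex.exp_add,
    mul_comm (2 * Real.pi * Complex.I) (Nat.cast _), Complex.exp_nat_mul_two_pi_mul_I, one_mul]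

section PadBetaStep

variable {p : ℕ} [hp : Fact p.Prime]

theorem norm_padBetaStep (k u : ℕ) : ‖padBetaStep p k u‖ = 1 :=
  norm_padBeta k _

theorem padBeta_eq_padBetaStep_floor (k : ℕ) (x : ℝ) :
    padBeta p k x = padBetaStep p k ⌊(p : ℝ) ^ (Nat.log p k + 1) * x⌋₊ := by
  have hpow : (p : ℝ) ^ (Nat.log p k + 1) ≠ 0 :=
    pow_ne_zero _ (Nat.cast_ne_zero.2 hp.out.ne_zero)
  rw [padBetaStep, padBeta, padBeta, padChar, padChar, appr_phiPlus_congr]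
  rw [div_mul_cancel₀ _ hpow, Nat.floor_natCast, mul_comm x]

theorem padBetaStep_mul_add (k q : ℕ) {c : ℕ} (hc : c < p) :
    padBetaStep p k (q * p + c) = padBetaStep p k (q * p) * leadingRoot p k ^ c := by
  have floor_div_mul (u : ℕ) :
      ⌊(u : ℝ) / (p : ℝ) ^ (Nat.log p k + 1) * (p : ℝ) ^ (Nat.log p k + 1)⌋₊ = u := by
    rw [div_mul_cancel₀ _ (pow_ne_zero _ (Nat.cast_ne_zero.2 hp.out.ne_zero)), Nat.floor_natCast]
  rw [padBetaStep, padBetaStep, padBeta, padBeta, padChar, padChar,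
    appr_phiPlus_eq_add_mul_pow hc (floor_div_mul _) (floor_div_mul _),
    ← exp_radInv_mul_pow_log hp.out.one_lt, ← Complex.exp_nat_mul, ← Complex.exp_add]
  congr 1
  push_cast
  ring

theorem sum_padBetaStep_range_mul {k : ℕ} (hk : k ≠ 0) (n : ℕ) :
    ∑ u ∈ Finset.range (n * p), padBetaStep p k u = 0 := by
  have hω := isPrimitiveRoot_leadingRoot hp.out hk
  simpa using sum_range_mul_add_of_pow_eq_one (hω.ne_one hp.out.one_lt) hω.pow_eq_one
    (fun q _ hc => padBetaStep_mul_add k q hc) n p.zero_le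

theorem sum_norm_sum_padBetaStep_sq {k : ℕ} (hk : k ≠ 0) (n : ℕ) :
    ∑ u ∈ Finset.range (n * p), ‖∑ v ∈ Finset.range u, padBetaStep p k v‖ ^ 2 =
      n * p / (2 * Real.sin ((k / p ^ Nat.log p k : ℕ) * Real.pi / p) ^ 2) := by
  have hω := isPrimitiveRoot_leadingRoot hp.out hk
  rw [sum_norm_sum_range_sq_of_pow_eq_one hp.out.ne_zero (hω.ne_one hp.out.one_lt) hω.pow_eq_one
    (fun q _ hc => padBetaStep_mul_add k q hc) (fun q => norm_padBetaStep k (q * p)) n,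
    norm_leadingRoot_sub_one_sq, mul_div_mul_comm]
  ring

end PadBetaStep

theorem integral_abs_sub_beta (p : ℕ) [hp : Fact p.Prime] (k : ℕ) (hk : 1 ≤ k) :
    ∫ x in Set.Ico (0:ℝ) 1, ∫ y in Set.Ico (0:ℝ) 1,
        |x - y| * (starRingEnd ℂ) (padBeta p k x) * padBeta p k y
      = (1 / (p : ℂ) ^ (2 * (Nat.log p k + 1))) *
          ((1 : ℂ) / 3 -
            1 / (Real.sin ((k / p ^ Nat.log p k : ℕ) * Real.pi / p) : ℂ) ^ 2) := by
  have hk₀ : k ≠ 0 := Nat.one_le_iff_ne_zero.1 hk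
  have hN : p ^ (Nat.log p k + 1) ≠ 0 := pow_ne_zero _ hp.out.ne_zero
  have sum_eq_zero := sum_padBetaStep_range_mul (p := p) hk₀ (p ^ Nat.log p k)
  have sum_sq := sum_norm_sum_padBetaStep_sq (p := p) hk₀ (p ^ Nat.log p k)
  rw [← pow_succ] at sum_eq_zero sum_sq
  calc _ = ∫ x in (0 : ℝ)..1, ∫ y in (0 : ℝ)..1,
        |x - y| • (conj (padBetaStep p k ⌊(p ^ (Nat.log p k + 1) : ℕ) * x⌋₊) *
          padBetaStep p k ⌊(p ^ (Nat.log p k + 1) : ℕ) * y⌋₊) := by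
        simp only [integral_Ico_eq_integral_Ioc, intervalIntegral.integral_of_le zero_le_one,
          Complex.real_smul, padBeta_eq_padBetaStep_floor, Nat.cast_pow, mul_assoc]
    _ = _ := by
        rw [integral_integral_abs_sub_smul_conj_mul_comp_floor_mul hN sum_eq_zero, sum_sq]
        simp only [norm_padBetaStep, one_pow, Finset.sum_const, Finset.card_range, nsmul_one]
        have hp₀ : (p : ℂ) ≠ 0 := Nat.cast_ne_zero.2 hp.out.ne_zero
        push_cast
        field_simp
        ring
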